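/- arXiv:2103.01433 — 2 statements merged into one kernel-verified Lean document; each statement's English description precedes it below -/
import Mathlib

section
/- Let K ≥ 1 and let Ḡ_k, Ē_k, F̄_k > 0 for k = 1,…,K. Define R̄(τ) := (1 − τ) Σ_{k=1}^K ln(1 + Ḡ_kτ/(Ē_kτ + F̄_k)) for τ ∈ [0,1]. Then R̄(0) = R̄(1) = 0, R̄′(0⁺) > 0, R̄′(1⁻) < 0, and there is a unique τ* ∈ (0,1) satisfying R̄′(τ*) = Σ_{k=1}^K ( Ḡ_kF̄_k(1−τ*)/((Ē_kτ* + F̄_k)((Ḡ_k + Ē_k)τ* + F̄_k)) − ln(1 + Ḡ_kτ*/(Ē_kτ* + F̄_k)) ) = 0; this τ* is the unique maximizer of R̄ over (0,1). -/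
open Real Set

/-!
Write `A t = e * t + f` and `B t = (g + e) * t + f`, so that a receiver contributes
`(1 - t) * log (B t / A t)`. Since `A t + (1 - t) * e` and `B t + (1 - t) * (g + e)` are the
constants `A 1` and `B 1`, the second derivative of this contribution collapses to
`-g * f * (A 1 * B t + B 1 * A t) / (A t * B t) ^ 2`, which is negative once `A` and `B` are
positive at both endpoints of `[0, 1]`. The derivative of the sum-rate is therefore strictly
decreasing; it is positive at `0` and negative at `1`, so it has exactly one zero, where the
sum-rate is maximal.
-/

section CriticalPoint

variable {f f' : ℝ → ℝ}

lemma lt_of_strictAntiOn_deriv_of_deriv_eq_zero {D : Set ℝ} (hD : Convex ℝ D)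
    (hf : ∀ x ∈ D, HasDerivWithinAt f (f' x) D x) (hf' : StrictAntiOn f' D)
    {c x : ℝ} (hc : c ∈ D) (hfc : f' c = 0) (hx : x ∈ D) (hxc : x ≠ c) : f x < f c := by
  have hcont : ContinuousOn f D := fun y hy => (hf y hy).continuousWithinAt
  have hderiv (s : Set ℝ) : ∀ y ∈ interior (D ∩ s),
      HasDerivWithinAt f (f' y) (interior (D ∩ s)) y := fun y hy =>
    (hf y (interior_subset hy).1).mono (interior_subset.trans inter_subset_left)
  rcases hxc.lt_or_gt with hlt | hgt
  · have hmono : StrictMonoOn f (D ∩ Iic c) := by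
      refine strictMonoOn_of_hasDerivWithinAt_pos (hD.inter (convex_Iic c))
        (hcont.mono inter_subset_left) (hderiv _) fun y hy => ?_
      rw [interior_inter, interior_Iic] at hy
      exact hfc ▸ hf' (interior_subset hy.1) hc hy.2
    exact hmono ⟨hx, hlt.le⟩ ⟨hc, self_mem_Iic⟩ hlt
  · have hanti : StrictAntiOn f (D ∩ Ici c) := by
      refine strictAntiOn_of_hasDerivWithinAt_neg (hD.inter (convex_Ici c))
        (hcont.mono inter_subset_left) (hderiv _) fun y hy => ?_
      rw [interior_inter, interior_Ici] at hy
      exact hfc ▸ hf' hc (interior_subset hy.1) hy.2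
    exact hanti ⟨hc, self_mem_Ici⟩ ⟨hx, hgt.le⟩ hgt

lemma exists_unique_deriv_eq_zero_and_forall_lt {a b : ℝ} (hab : a ≤ b)
    (hf : ∀ x ∈ Icc a b, HasDerivWithinAt f (f' x) (Icc a b) x) (hf' : StrictAntiOn f' (Icc a b))
    (ha : 0 < f' a) (hb : f' b < 0) :
    ∃ c ∈ Ioo a b, f' c = 0 ∧ (∀ x ∈ Icc a b, f' x = 0 → x = c) ∧
      ∀ x ∈ Icc a b, x ≠ c → f x < f c := by
  obtain ⟨c, hc, hfc⟩ := exists_hasDerivWithinAt_eq_of_lt_of_gt hab hf ha hb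
  have hcI := Ioo_subset_Icc_self hc
  exact ⟨c, hc, hfc, fun x hx hfx => hf'.injOn hx hcI (hfx.trans hfc.symm), fun x hx hxc =>
    lt_of_strictAntiOn_deriv_of_deriv_eq_zero (convex_Icc a b) hf hf' hcI hfc hx hxc⟩

end CriticalPoint

lemma mul_add_pos_of_mem_Icc {R : Type*} [CommRing R] [LinearOrder R] [IsStrictOrderedRing R]
    {a b t : R} (hb : 0 < b) (hab : 0 < a + b) (ht : t ∈ Icc (0 : R) 1) : 0 < a * t + b := by
  have hcombo : 0 < (1 - t) * b + t * (a + b) :=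
    convex_Ioi (0 : R) hb hab (sub_nonneg.2 ht.2) ht.1 (sub_add_cancel 1 t)
  linarith

lemma hasDerivAt_const_mul_add_const {𝕜 : Type*} [NontriviallyNormedField 𝕜] (a b t : 𝕜) :
    HasDerivAt (fun t => a * t + b) a t := by
  simpa only [id, mul_one] using ((hasDerivAt_id t).const_mul a).add_const b

section SingleReceiver

/-- The rate `ln (1 + SINR)` of a receiver with pilot fraction `t`, whose effective SINR is
`g * t / (e * t + f)`; the loss of the fraction `t` of the block to pilots is not included. -/
noncomputable def rate (g e f t : ℝ) : ℝ :=
  log (1 + g * t / (e * t + f))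

/-- The derivative in `t` of the net rate `(1 - t) * rate g e f t` of one receiver: a summand of the
first-derivative formula (44). -/
noncomputable def netRateDeriv (g e f t : ℝ) : ℝ :=
  g * f * (1 - t) / ((e * t + f) * ((g + e) * t + f)) - rate g e f t

variable {g e f t : ℝ}

lemma one_add_mul_div_eq_div (hA : e * t + f ≠ 0) :
    1 + g * t / (e * t + f) = ((g + e) * t + f) / (e * t + f) := by
  rw [one_add_div hA]
  ring

lemma hasDerivAt_rate (hA : e * t + f ≠ 0) (hB : (g + e) * t + f ≠ 0) :
    HasDerivAt (rate g e f) (g * f / ((e * t + f) * ((g + e) * t + f))) t := by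
  have hnum := (hasDerivAt_id' t).const_mul g
  have hden := hasDerivAt_const_mul_add_const e f t
  have hne : 1 + g * t / (e * t + f) ≠ 0 := one_add_mul_div_eq_div hA ▸ div_ne_zero hB hA
  refine (((hnum.fun_div hden hA).const_add 1).log hne).congr_deriv ?_
  rw [one_add_mul_div_eq_div hA]
  field_simp
  ring

lemma hasDerivAt_netRate (hA : e * t + f ≠ 0) (hB : (g + e) * t + f ≠ 0) :
    HasDerivAt (fun t => (1 - t) * rate g e f t) (netRateDeriv g e f t) t := by
  refine (((hasDerivAt_id' t).const_sub 1).mul (hasDerivAt_rate hA hB)).congr_deriv ?_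
  rw [netRateDeriv]
  ring

lemma hasDerivAt_netRateDeriv (hA : e * t + f ≠ 0) (hB : (g + e) * t + f ≠ 0) :
    HasDerivAt (netRateDeriv g e f)
      (-(g * f * ((e + f) * ((g + e) * t + f) + (g + e + f) * (e * t + f)) /
        ((e * t + f) * ((g + e) * t + f)) ^ 2)) t := by
  have hnum := ((hasDerivAt_id' t).const_sub 1).const_mul (g * f)
  have hden := (hasDerivAt_const_mul_add_const e f t).fun_mul
    (hasDerivAt_const_mul_add_const (g + e) f t)
  refine ((hnum.fun_div hden (mul_ne_zero hA hB)).sub (hasDerivAt_rate hA hB)).congr_deriv ?_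
  field_simp
  ring

lemma strictAntiOn_netRateDeriv (hg : 0 < g) (hf : 0 < f) (hef : 0 < e + f) :
    StrictAntiOn (netRateDeriv g e f) (Icc 0 1) := by
  have hgef : 0 < g + e + f := by linarith
  have hA {t : ℝ} (ht : t ∈ Icc (0 : ℝ) 1) : 0 < e * t + f := mul_add_pos_of_mem_Icc hf hef ht
  have hB {t : ℝ} (ht : t ∈ Icc (0 : ℝ) 1) : 0 < (g + e) * t + f :=
    mul_add_pos_of_mem_Icc hf hgef ht
  have hderiv {t : ℝ} (ht : t ∈ Icc (0 : ℝ) 1) :=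
    hasDerivAt_netRateDeriv (hA ht).ne' (hB ht).ne'
  refine strictAntiOn_of_hasDerivWithinAt_neg (convex_Icc 0 1)
    (fun t ht => (hderiv ht).continuousAt.continuousWithinAt)
    (fun t ht => (hderiv (interior_subset ht)).hasDerivWithinAt) fun t ht => ?_
  have hAt := hA (interior_subset ht)
  have hBt := hB (interior_subset ht)
  rw [neg_lt_zero]
  positivity

lemma netRateDeriv_zero_pos (hg : 0 < g) (hf : 0 < f) : 0 < netRateDeriv g e f 0 := by
  simp only [netRateDeriv, rate, mul_zero, zero_add, zero_div, add_zero, log_one, sub_zero]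
  positivity

lemma netRateDeriv_one_neg (hg : 0 < g) (hef : 0 < e + f) : netRateDeriv g e f 1 < 0 := by
  have hlog : 0 < log (1 + g / (e + f)) := log_pos (lt_add_of_pos_right 1 (div_pos hg hef))
  simpa only [netRateDeriv, rate, sub_self, mul_zero, zero_div, mul_one, zero_sub, neg_lt_zero]

end SingleReceiver

section SumRate

variable {ι : Type*} [Fintype ι]

/-- The ergodic sum-rate of the receivers in `ι` as a function of the pilot fraction `τ`. -/
noncomputable def sumRate (G E F : ι → ℝ) (τ : ℝ) : ℝ :=
  (1 - τ) * ∑ k, rate (G k) (E k) (F k) τ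

/-- The right-hand side of formula (44) for the derivative of `sumRate`. -/
noncomputable def sumRateDeriv (G E F : ι → ℝ) (τ : ℝ) : ℝ :=
  ∑ k, netRateDeriv (G k) (E k) (F k) τ

variable {G E F : ι → ℝ}

lemma hasDerivAt_sumRate {τ : ℝ} (hA : ∀ k, E k * τ + F k ≠ 0)
    (hB : ∀ k, (G k + E k) * τ + F k ≠ 0) :
    HasDerivAt (sumRate G E F) (sumRateDeriv G E F τ) τ := by
  have hsum : sumRate G E F = fun τ => ∑ k, (1 - τ) * rate (G k) (E k) (F k) τ :=
    funext fun τ => Finset.mul_sum ..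
  rw [hsum]
  exact HasDerivAt.fun_sum fun k _ => hasDerivAt_netRate (hA k) (hB k)

lemma hasDerivAt_sumRate_of_mem_Icc (hG : ∀ k, 0 < G k) (hF : ∀ k, 0 < F k)
    (hEF : ∀ k, 0 < E k + F k) {τ : ℝ} (hτ : τ ∈ Icc (0 : ℝ) 1) :
    HasDerivAt (sumRate G E F) (sumRateDeriv G E F τ) τ :=
  hasDerivAt_sumRate (fun k => (mul_add_pos_of_mem_Icc (hF k) (hEF k) hτ).ne') fun k =>
    (mul_add_pos_of_mem_Icc (hF k) (by linarith [hG k, hEF k]) hτ).ne'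

variable [Nonempty ι]

lemma strictAntiOn_sumRateDeriv (hG : ∀ k, 0 < G k) (hF : ∀ k, 0 < F k)
    (hEF : ∀ k, 0 < E k + F k) : StrictAntiOn (sumRateDeriv G E F) (Icc 0 1) :=
  fun _ hx _ hy hxy => Finset.sum_lt_sum_of_nonempty Finset.univ_nonempty fun k _ =>
    strictAntiOn_netRateDeriv (hG k) (hF k) (hEF k) hx hy hxy

lemma sumRateDeriv_zero_pos (hG : ∀ k, 0 < G k) (hF : ∀ k, 0 < F k) :
    0 < sumRateDeriv G E F 0 :=
  Finset.sum_pos (fun k _ => netRateDeriv_zero_pos (hG k) (hF k)) Finset.univ_nonempty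

lemma sumRateDeriv_one_neg (hG : ∀ k, 0 < G k) (hEF : ∀ k, 0 < E k + F k) :
    sumRateDeriv G E F 1 < 0 :=
  Finset.sum_neg (fun k _ => netRateDeriv_one_neg (hG k) (hEF k)) Finset.univ_nonempty

theorem stmt_14_general (hG : ∀ k, 0 < G k) (hF : ∀ k, 0 < F k)
    (hEF : ∀ k, 0 < E k + F k) :
    sumRate G E F 0 = 0 ∧ sumRate G E F 1 = 0 ∧
    0 < deriv (sumRate G E F) 0 ∧ deriv (sumRate G E F) 1 < 0 ∧
    ∃ τs ∈ Ioo (0 : ℝ) 1,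
      deriv (sumRate G E F) τs = sumRateDeriv G E F τs ∧
      sumRateDeriv G E F τs = 0 ∧
      (∀ τ ∈ Ioo (0 : ℝ) 1, sumRateDeriv G E F τ = 0 → τ = τs) ∧
      (∀ τ ∈ Ioo (0 : ℝ) 1, τ ≠ τs → sumRate G E F τ < sumRate G E F τs) := by
  have hderiv {τ : ℝ} (hτ : τ ∈ Icc (0 : ℝ) 1) := hasDerivAt_sumRate_of_mem_Icc hG hF hEF hτ
  have hpos : 0 < sumRateDeriv G E F 0 := sumRateDeriv_zero_pos hG hF
  have hneg : sumRateDeriv G E F 1 < 0 := sumRateDeriv_one_neg hG hEF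
  obtain ⟨τs, hτs, hzero, hunique, hmax⟩ := exists_unique_deriv_eq_zero_and_forall_lt zero_le_one
    (fun τ hτ => (hderiv hτ).hasDerivWithinAt) (strictAntiOn_sumRateDeriv hG hF hEF) hpos hneg
  refine ⟨by simp [sumRate, rate], by simp [sumRate], ?_, ?_, τs, hτs,
    (hderiv (Ioo_subset_Icc_self hτs)).deriv, hzero,
    fun τ hτ => hunique τ (Ioo_subset_Icc_self hτ), fun τ hτ => hmax τ (Ioo_subset_Icc_self hτ)⟩
  · rwa [(hderiv (left_mem_Icc.2 zero_le_one)).deriv]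
  · rwa [(hderiv (right_mem_Icc.2 zero_le_one)).deriv]

end SumRate

theorem stmt_14 (K : ℕ) (hK : 1 ≤ K) (G E F : Fin K → ℝ)
    (hG : ∀ k, 0 < G k) (hE : ∀ k, 0 < E k) (hF : ∀ k, 0 < F k)
    (R : ℝ → ℝ)
    (hR : ∀ τ : ℝ,
      R τ = (1 - τ) * ∑ k, Real.log (1 + G k * τ / (E k * τ + F k))) :
    R 0 = 0 ∧ R 1 = 0 ∧ 0 < deriv R 0 ∧ deriv R 1 < 0 ∧
    ∃ τs ∈ Set.Ioo (0 : ℝ) 1,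
      deriv R τs =
        (∑ k, (G k * F k * (1 - τs) /
            ((E k * τs + F k) * ((G k + E k) * τs + F k)) -
          Real.log (1 + G k * τs / (E k * τs + F k)))) ∧
      (∑ k, (G k * F k * (1 - τs) /
          ((E k * τs + F k) * ((G k + E k) * τs + F k)) -
        Real.log (1 + G k * τs / (E k * τs + F k)))) = 0 ∧
      (∀ τ ∈ Set.Ioo (0 : ℝ) 1,
        (∑ k, (G k * F k * (1 - τ) /
            ((E k * τ + F k) * ((G k + E k) * τ + F k)) -
          Real.log (1 + G k * τ / (E k * τ + F k)))) = 0 → τ = τs) ∧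
      (∀ τ ∈ Set.Ioo (0 : ℝ) 1, τ ≠ τs → R τ < R τs) := by
  have : Nonempty (Fin K) := Fin.pos_iff_nonempty.1 hK
  obtain rfl : R = sumRate G E F := funext hR
  exact stmt_14_general hG hF fun k => add_pos (hE k) (hF k)
end

section
/- Let q̂ > 0 and σ² > 0, and for integers n ≥ 2 define g_n(x) := ∫_{σ²}^∞ (n^n x^{n−1}/((n−1)! v^n)) e^{−nx/v} · (1/q̂) e^{−(v−σ²)/q̂} dv for x > 0. Then: (i) for every x with 0 < x < σ², lim_{n→∞} g_n(x) = 0; and (ii) for every x > σ², lim_{n→∞} g_n(x) = (1/q̂) e^{−(x−σ²)/q̂}. That is, g_n converges pointwise to the density f_V(x) = (1/q̂)e^{−(x−σ²)/q̂}·𝟙{x ≥ σ²} at every x ≠ σ². -/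
open MeasureTheory Real Set Filter

/-!
Substitute `w = v⁻¹` in the mixture. The Gamma density of shape `a` and rate `a / v = a * w` at `x`,
times the Jacobian `w ^ (-2)`, is `a / (a - 1)` times the density at `w` of the Gamma law of shape
`a - 1` and rate `a * x`. That law has mean `(a - 1) / (a * x)` and variance
`(a - 1) / (a * x) ^ 2`, so by Chebyshev's inequality it concentrates at `x⁻¹` as `a → ∞`, and the
average of `f w⁻¹` against it, for a bounded mixing density `f`, tends to `f x` wherever `f` is
continuous.
-/

open ProbabilityTheory Topology

section Concentration

variable {ι : Type*} {l : Filter ι}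

theorem tendsto_measureReal_compl_of_tendsto_variance {μ : ι → Measure ℝ} {c : ℝ}
    (hμ : ∀ᶠ i in l, IsFiniteMeasure (μ i)) (hL2 : ∀ᶠ i in l, MemLp id 2 (μ i))
    (hmean : Tendsto (fun i => (μ i)[id]) l (𝓝 c))
    (hvar : Tendsto (fun i => Var[id; μ i]) l (𝓝 0)) {s : Set ℝ} (hs : s ∈ 𝓝 c) :
    Tendsto (fun i => (μ i).real sᶜ) l (𝓝 0) := by
  obtain ⟨δ, hδ, hball⟩ := Metric.mem_nhds_iff.1 hs
  have hlim : Tendsto (fun i => Var[id; μ i] / (δ / 2) ^ 2) l (𝓝 0) := by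
    simpa only [zero_div] using hvar.div_const ((δ / 2) ^ 2)
  refine squeeze_zero' (.of_forall fun _ => measureReal_nonneg) ?_ hlim
  filter_upwards [hμ, hL2, hmean.eventually (Metric.ball_mem_nhds c (half_pos hδ))]
    with i _ hL2 hmean
  have hsub : sᶜ ⊆ {w | δ / 2 ≤ |id w - (μ i)[id]|} := fun w hw => by
    have hfar : δ ≤ dist w c := not_lt.1 fun h => hw (hball h)
    have htri := dist_triangle w (μ i)[id] c
    change δ / 2 ≤ dist w (μ i)[id]
    linarith [Metric.mem_ball.1 hmean]
  exact ENNReal.toReal_le_of_le_ofReal (div_nonneg (variance_nonneg _ _) (sq_nonneg _))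
    ((measure_mono hsub).trans (meas_ge_le_variance_div_sq hL2 (half_pos hδ)))

theorem tendsto_integral_of_tendsto_measureReal_compl {X E : Type*} [TopologicalSpace X]
    [MeasurableSpace X] [OpensMeasurableSpace X] [NormedAddCommGroup E] [NormedSpace ℝ E]
    [CompleteSpace E] {μ : ι → Measure X} {c : X} (hμ : ∀ᶠ i in l, IsProbabilityMeasure (μ i))
    (hμc : ∀ s ∈ 𝓝 c, Tendsto (fun i => (μ i).real sᶜ) l (𝓝 0)) {h : X → E}
    (hm : StronglyMeasurable h) {M : ℝ} (hM : ∀ w, ‖h w‖ ≤ M) (hc : ContinuousAt h c) :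
    Tendsto (fun i => ∫ w, h w ∂μ i) l (𝓝 (h c)) := by
  rw [Metric.tendsto_nhds]
  intro ε hε
  obtain ⟨s, hsε, hs, hcs⟩ := mem_nhds_iff.1 (Metric.continuousAt_iff'.1 hc (ε / 2) (half_pos hε))
  have hlim : Tendsto (fun i => ε / 2 + 2 * M * (μ i).real sᶜ) l (𝓝 (ε / 2)) := by
    simpa using ((hμc s (hs.mem_nhds hcs)).const_mul (2 * M)).const_add (ε / 2)
  filter_upwards [hμ, hlim.eventually_lt_const (half_lt_self hε)] with i _ hi
  have hint : Integrable h (μ i) := .of_bound hm.aestronglyMeasurable M (ae_of_all _ hM)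
  have hdiff : Integrable (fun w => h w - h c) (μ i) := hint.sub (integrable_const _)
  have hnear : ‖∫ w in s, (h w - h c) ∂μ i‖ ≤ ε / 2 * (μ i).real s :=
    norm_setIntegral_le_of_norm_le_const (measure_lt_top _ _) fun w hw => by
      exact dist_eq_norm (h w) (h c) ▸ (hsε hw).le
  have hfar : ‖∫ w in sᶜ, (h w - h c) ∂μ i‖ ≤ 2 * M * (μ i).real sᶜ :=
    norm_setIntegral_le_of_norm_le_const (measure_lt_top _ _) fun w _ => by
      linarith [norm_sub_le (h w) (h c), hM w, hM c]
  calc dist (∫ w, h w ∂μ i) (h c) = ‖∫ w, (h w - h c) ∂μ i‖ := by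
        rw [dist_eq_norm, integral_sub hint (integrable_const _), integral_const, probReal_univ,
          one_smul]
    _ ≤ ‖∫ w in s, (h w - h c) ∂μ i‖ + ‖∫ w in sᶜ, (h w - h c) ∂μ i‖ := by
        rw [← integral_add_compl hs.measurableSet hdiff]
        exact norm_add_le _ _
    _ ≤ ε / 2 * 1 + 2 * M * (μ i).real sᶜ := by
        gcongr
        exact hnear.trans (by gcongr; exact measureReal_le_one)
    _ < ε := by rwa [mul_one]

end Concentration

section GammaMoments

variable {a r : ℝ}

theorem gammaPDFReal_of_nonneg {x : ℝ} (hx : 0 ≤ x) :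
    gammaPDFReal a r x = r ^ a / Gamma a * x ^ (a - 1) * exp (-(r * x)) :=
  if_pos hx

theorem integral_gammaMeasure {E : Type*} [NormedAddCommGroup E] [NormedSpace ℝ E] (ha : 0 < a)
    (hr : 0 < r) (h : ℝ → E) :
    ∫ w, h w ∂gammaMeasure a r = ∫ w in Ioi 0, gammaPDFReal a r w • h w := by
  have hmeas : Measurable (gammaPDF a r) := (measurable_gammaPDFReal a r).ennreal_ofReal
  rw [gammaMeasure, integral_withDensity_eq_integral_toReal_smul hmeas
    (ae_of_all _ fun _ => ENNReal.ofReal_lt_top), ← integral_Ici_eq_integral_Ioi,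
    setIntegral_eq_integral_of_forall_compl_eq_zero]
  · simp only [gammaPDF, ENNReal.toReal_ofReal (gammaPDFReal_nonneg ha hr _)]
  · intro w hw
    rw [gammaPDFReal, if_neg (notMem_Ici.1 hw).not_ge, zero_smul]

theorem integral_rpow_gammaMeasure (ha : 0 < a) (hr : 0 < r) {p : ℝ} (hp : 0 < a + p) :
    ∫ w, w ^ p ∂gammaMeasure a r = Gamma (a + p) / (Gamma a * r ^ p) := by
  have hpdf : ∀ w ∈ Ioi (0 : ℝ), gammaPDFReal a r w • w ^ p =
      r ^ a / Gamma a * (w ^ (a + p - 1) * exp (-(r * w))) := fun w (hw : 0 < w) => by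
    rw [gammaPDFReal_of_nonneg hw.le, smul_eq_mul, add_sub_right_comm, rpow_add hw]
    ring
  rw [integral_gammaMeasure ha hr, setIntegral_congr_fun measurableSet_Ioi hpdf,
    integral_const_mul, integral_rpow_mul_exp_neg_mul_Ioi hp hr, one_div, inv_rpow hr.le,
    rpow_add hr]
  field_simp

theorem integral_id_gammaMeasure (ha : 0 < a) (hr : 0 < r) : (gammaMeasure a r)[id] = a / r := by
  have hmoment := integral_rpow_gammaMeasure ha hr (p := 1) (by positivity)
  simp only [rpow_one, Gamma_add_one ha.ne'] at hmoment
  simp only [id_eq, hmoment]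
  field_simp

theorem integral_sq_gammaMeasure (ha : 0 < a) (hr : 0 < r) :
    ∫ w, w ^ 2 ∂gammaMeasure a r = a * (a + 1) / r ^ 2 := by
  have hmoment := integral_rpow_gammaMeasure ha hr (p := 2) (by positivity)
  rw [show a + 2 = a + 1 + 1 by ring, Gamma_add_one (by positivity), Gamma_add_one ha.ne']
    at hmoment
  simp only [rpow_two] at hmoment
  rw [hmoment]
  field_simp

theorem memLp_two_id_gammaMeasure (ha : 0 < a) (hr : 0 < r) : MemLp id 2 (gammaMeasure a r) := by
  refine (memLp_two_iff_integrable_sq aestronglyMeasurable_id).2 (.of_integral_ne_zero ?_)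
  simp only [id_eq, integral_sq_gammaMeasure ha hr]
  positivity

theorem variance_id_gammaMeasure (ha : 0 < a) (hr : 0 < r) :
    Var[id; gammaMeasure a r] = a / r ^ 2 := by
  have := isProbabilityMeasure_gammaMeasure ha hr
  rw [variance_eq_sub (memLp_two_id_gammaMeasure ha hr), integral_id_gammaMeasure ha hr]
  simp only [Pi.pow_apply, id_eq, integral_sq_gammaMeasure ha hr]
  ring

end GammaMoments

section GammaMixture

variable {E : Type*} [NormedAddCommGroup E] [NormedSpace ℝ E] {a r x : ℝ}

theorem rpow_neg_two_mul_gammaPDFReal_mul (ha : 1 < a) (hr : 0 < r) (hx : 0 < x) {w : ℝ}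
    (hw : 0 < w) :
    w ^ (-2 : ℝ) * gammaPDFReal a (r * w) x =
      r / (a - 1) * gammaPDFReal (a - 1) (r * x) w := by
  have hGamma : Gamma a = (a - 1) * Gamma (a - 1) := by
    simpa only [sub_add_cancel] using Gamma_add_one (sub_pos.2 ha).ne'
  have hw_pow : w ^ (a - 1 - 1) = w ^ (-2 : ℝ) * w ^ a := by
    rw [← rpow_add hw]
    ring_nf
  have hr_pow : r ^ a = r * r ^ (a - 1) := by rw [rpow_sub_one hr.ne']; field_simp
  rw [gammaPDFReal_of_nonneg hx.le, gammaPDFReal_of_nonneg hw.le, hGamma, hw_pow,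
    mul_rpow hr.le hw.le, mul_rpow hr.le hx.le, hr_pow, mul_right_comm r w x, ← div_div]
  ring

theorem integral_gammaPDFReal_div_smul (ha : 1 < a) (hr : 0 < r) (hx : 0 < x) (f : ℝ → E) :
    ∫ v in Ioi 0, gammaPDFReal a (r / v) x • f v =
      (r / (a - 1)) • ∫ w, f w⁻¹ ∂gammaMeasure (a - 1) (r * x) := by
  rw [integral_gammaMeasure (sub_pos.2 ha) (by positivity), ← integral_smul,
    ← integral_comp_rpow_Ioi _ (p := -1) (by norm_num)]
  refine setIntegral_congr_fun measurableSet_Ioi fun w (hw : 0 < w) => ?_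
  have hexp : (-1 - 1 : ℝ) = -2 := by norm_num
  simp only [hexp, abs_neg, abs_one, one_mul, rpow_neg_one, div_inv_eq_mul, smul_smul,
    rpow_neg_two_mul_gammaPDFReal_mul ha hr hx hw]

theorem tendsto_integral_gammaMeasure_sub_one [CompleteSpace E] (hx : 0 < x) {h : ℝ → E}
    (hm : StronglyMeasurable h) {M : ℝ} (hM : ∀ w, ‖h w‖ ≤ M) (hc : ContinuousAt h x⁻¹) :
    Tendsto (fun a => ∫ w, h w ∂gammaMeasure (a - 1) (a * x)) atTop (𝓝 (h x⁻¹)) := by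
  have hprob : ∀ᶠ a in atTop, IsProbabilityMeasure (gammaMeasure (a - 1) (a * x)) := by
    filter_upwards [eventually_gt_atTop 1] with a ha
    exact isProbabilityMeasure_gammaMeasure (sub_pos.2 ha) (by positivity)
  have hL2 : ∀ᶠ a in atTop, MemLp id 2 (gammaMeasure (a - 1) (a * x)) := by
    filter_upwards [eventually_gt_atTop 1] with a ha
    exact memLp_two_id_gammaMeasure (sub_pos.2 ha) (by positivity)
  have hmean : Tendsto (fun a => (gammaMeasure (a - 1) (a * x))[id]) atTop (𝓝 x⁻¹) := by
    have hlim : Tendsto (fun a : ℝ => x⁻¹ - x⁻¹ * a⁻¹) atTop (𝓝 x⁻¹) := by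
      simpa using (tendsto_inv_atTop_zero.const_mul x⁻¹).const_sub x⁻¹
    refine hlim.congr' ?_
    filter_upwards [eventually_gt_atTop 1] with a ha
    rw [integral_id_gammaMeasure (sub_pos.2 ha) (by positivity)]
    field_simp
  have hvar : Tendsto (fun a => Var[id; gammaMeasure (a - 1) (a * x)]) atTop (𝓝 0) := by
    have hlim : Tendsto (fun a : ℝ => (a⁻¹ - a⁻¹ ^ 2) / x ^ 2) atTop (𝓝 0) := by
      simpa using (tendsto_inv_atTop_zero.sub (tendsto_inv_atTop_zero.pow 2)).div_const (x ^ 2)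
    refine hlim.congr' ?_
    filter_upwards [eventually_gt_atTop 1] with a ha
    rw [variance_id_gammaMeasure (sub_pos.2 ha) (by positivity)]
    field_simp
  exact tendsto_integral_of_tendsto_measureReal_compl hprob
    (fun _ hs => tendsto_measureReal_compl_of_tendsto_variance
      (hprob.mono fun _ _ => inferInstance) hL2 hmean hvar hs) hm hM hc

theorem tendsto_integral_gammaPDFReal_div_smul [CompleteSpace E] (hx : 0 < x) {f : ℝ → E}
    (hf : StronglyMeasurable f) {M : ℝ} (hM : ∀ v, ‖f v‖ ≤ M) (hc : ContinuousAt f x) :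
    Tendsto (fun a => ∫ v in Ioi 0, gammaPDFReal a (a / v) x • f v) atTop (𝓝 (f x)) := by
  have hcinv : ContinuousAt (fun w => f w⁻¹) x⁻¹ :=
    ContinuousAt.comp (by rwa [inv_inv]) (continuousAt_inv₀ (inv_ne_zero hx.ne'))
  have hfactor : Tendsto (fun a : ℝ => a / (a - 1)) atTop (𝓝 1) := by
    have hlim : Tendsto (fun a : ℝ => (1 - a⁻¹)⁻¹) atTop (𝓝 1) := by
      simpa using (tendsto_inv_atTop_zero.const_sub (1 : ℝ)).inv₀ (by norm_num)
    refine hlim.congr' ?_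
    filter_upwards [eventually_gt_atTop 1] with a ha
    have := (sub_pos.2 ha).ne'
    field_simp
  have hlim := hfactor.smul
    (tendsto_integral_gammaMeasure_sub_one hx (hf.comp_measurable measurable_inv)
      (fun w => hM w⁻¹) hcinv)
  rw [Function.comp_apply, inv_inv, one_smul] at hlim
  refine hlim.congr' ?_
  filter_upwards [eventually_gt_atTop 1] with a ha
  exact (integral_gammaPDFReal_div_smul ha (zero_lt_one.trans ha) hx f).symm

end GammaMixture

section ExponentialMixing

theorem gammaPDFReal_natCast {n : ℕ} (hn : n ≠ 0) (r : ℝ) {x : ℝ} (hx : 0 ≤ x) :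
    gammaPDFReal n r x = r ^ n * x ^ (n - 1) / (n - 1).factorial * exp (-(r * x)) := by
  obtain ⟨k, rfl⟩ := Nat.exists_eq_succ_of_ne_zero hn
  rw [gammaPDFReal_of_nonneg hx, Nat.succ_eq_add_one, Nat.add_sub_cancel, rpow_natCast,
    Nat.cast_add_one, Gamma_nat_eq_factorial, add_sub_cancel_right, rpow_natCast]
  ring

theorem exponentialPDFReal_eq_indicator (r : ℝ) :
    exponentialPDFReal r = (Ici 0).indicator fun x => r * exp (-(r * x)) := by
  ext x
  simp [exponentialPDFReal, gammaPDFReal, indicator_apply]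

theorem exponentialPDFReal_of_neg (r : ℝ) {x : ℝ} (hx : x < 0) : exponentialPDFReal r x = 0 := by
  rw [exponentialPDFReal_eq_indicator, indicator_of_notMem (notMem_Ici.2 hx)]

theorem exponentialPDFReal_of_nonneg (r : ℝ) {x : ℝ} (hx : 0 ≤ x) :
    exponentialPDFReal r x = r * exp (-(r * x)) := by
  rw [exponentialPDFReal_eq_indicator, indicator_of_mem (mem_Ici.2 hx)]

theorem norm_exponentialPDFReal_le {r : ℝ} (hr : 0 ≤ r) (x : ℝ) :
    ‖exponentialPDFReal r x‖ ≤ r := by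
  rw [exponentialPDFReal_eq_indicator, norm_indicator_eq_indicator_norm]
  refine indicator_apply_le' (fun hx => ?_) fun _ => hr
  have hexp : exp (-(r * x)) ≤ 1 := exp_le_one_iff.2 (neg_nonpos.2 (mul_nonneg hr hx))
  rw [norm_of_nonneg (by positivity)]
  exact mul_le_of_le_one_right hr hexp

theorem continuousAt_exponentialPDFReal (r : ℝ) {x : ℝ} (hx : x ≠ 0) :
    ContinuousAt (exponentialPDFReal r) x := by
  rw [exponentialPDFReal_eq_indicator]
  have hexp : Continuous fun x => r * exp (-(r * x)) := by fun_prop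
  refine hexp.continuousOn.continuousAt_indicator ?_
  rwa [frontier_Ici, mem_singleton_iff]

theorem setIntegral_Ici_gamma_mul_exp_eq {n : ℕ} (hn : n ≠ 0) {q s x : ℝ} (hs : 0 < s)
    (hx : 0 ≤ x) :
    ∫ v in Ici s, (n : ℝ) ^ n * x ^ (n - 1) / ((n - 1).factorial * v ^ n) *
        exp (-(n * x) / v) * (1 / q * exp (-(v - s) / q)) =
      ∫ v in Ioi 0, gammaPDFReal n (n / v) x • exponentialPDFReal (1 / q) (v - s) := by
  have hsub : Ici s ⊆ Ioi 0 := fun v hv => hs.trans_le hv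
  rw [← inter_eq_right.2 hsub, ← setIntegral_indicator measurableSet_Ici]
  congr 1 with v
  rw [gammaPDFReal_natCast hn _ hx, smul_eq_mul]
  rcases le_or_gt s v with hv | hv
  · rw [indicator_of_mem (mem_Ici.2 hv), exponentialPDFReal_of_nonneg _ (sub_nonneg.2 hv)]
    ring_nf
  · rw [indicator_of_notMem (notMem_Ici.2 hv), exponentialPDFReal_of_neg _ (sub_neg.2 hv), mul_zero]

end ExponentialMixing

theorem stmt_15 (qh σ2 : ℝ) (hqh : 0 < qh) (hσ : 0 < σ2)
    (g : ℕ → ℝ → ℝ)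
    (hg : ∀ n : ℕ, 2 ≤ n → ∀ x : ℝ, 0 < x →
      g n x = ∫ v in Set.Ici σ2,
        (n : ℝ) ^ n * x ^ (n - 1) / ((Nat.factorial (n - 1) : ℝ) * v ^ n) *
          Real.exp (-(n * x) / v) * ((1 / qh) * Real.exp (-(v - σ2) / qh))) :
    (∀ x : ℝ, 0 < x → x < σ2 →
      Tendsto (fun n : ℕ => g n x) atTop (nhds 0)) ∧
    (∀ x : ℝ, σ2 < x →
      Tendsto (fun n : ℕ => g n x) atTop
        (nhds ((1 / qh) * Real.exp (-(x - σ2) / qh)))) := by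
  have hlim (x : ℝ) (hx : 0 < x) (hxσ : x ≠ σ2) :
      Tendsto (fun n : ℕ => g n x) atTop (𝓝 (exponentialPDFReal (1 / qh) (x - σ2))) := by
    have hmeas : Measurable fun v => exponentialPDFReal (1 / qh) (v - σ2) := by fun_prop
    have hbound (v : ℝ) : ‖exponentialPDFReal (1 / qh) (v - σ2)‖ ≤ 1 / qh :=
      norm_exponentialPDFReal_le (one_div_pos.2 hqh).le _
    have hcont : ContinuousAt (fun v => exponentialPDFReal (1 / qh) (v - σ2)) x :=
      (continuousAt_exponentialPDFReal _ (sub_ne_zero.2 hxσ)).comp' (f := (· - σ2)) (by fun_prop)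
    refine ((tendsto_integral_gammaPDFReal_div_smul hx hmeas.stronglyMeasurable hbound hcont).comp
      tendsto_natCast_atTop_atTop).congr' ?_
    filter_upwards [eventually_ge_atTop 2] with n hn
    rw [hg n hn x hx, setIntegral_Ici_gamma_mul_exp_eq (by lia) hσ hx.le, Function.comp_apply]
  refine ⟨fun x hx hxσ => ?_, fun x hxσ => ?_⟩
  · simpa only [exponentialPDFReal_of_neg _ (sub_neg.2 hxσ)] using hlim x hx hxσ.ne
  · have hdensity : exponentialPDFReal (1 / qh) (x - σ2) = 1 / qh * exp (-(x - σ2) / qh) := by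
      rw [exponentialPDFReal_of_nonneg _ (sub_nonneg.2 hxσ.le)]
      ring_nf
    exact hdensity ▸ hlim x (hσ.trans hxσ) hxσ.ne'
end
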